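/- If T = Q_a is an infinitely renormalisable logistic map, then the set of folding points of the core inverse limit X′ is a Cantor set consisting entirely of nasty endpoints: F = E_N, and every point of X′ not in this Cantor set is not a folding point. -/

import Mathlib

open Set Filter Topology

/-- The inverse limit `lim←(K, T)`, as the space of backward orbits. -/
abbrev InvLim (T : ℝ → ℝ) (K : Set ℝ) :=
  {x : ℕ → ℝ // (∀ n, x n ∈ K) ∧ ∀ n, T (x (n + 1)) = x n}

/-- A subset of a topological space is an arc if it is the image of `[0,1]` under a
topological embedding. -/
def IsArc {Z : Type*} [TopologicalSpace Z] (A : Set Z) : Prop :=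
  ∃ f : Set.Icc (0:ℝ) 1 → Z, Topology.IsEmbedding f ∧ Set.range f = A

/-- A point `x` is an endpoint if for any two subcontinua `A`, `B` containing `x`,
either `A ⊆ B` or `B ⊆ A`. -/
def IsEndpointPt {Z : Type*} [TopologicalSpace Z] (x : Z) : Prop :=
  ∀ A B : Set Z, IsCompact A → IsConnected A → IsCompact B → IsConnected B →
    x ∈ A → x ∈ B → A ⊆ B ∨ B ⊆ A

/-- The ω-limit set of `c` under `T`. -/
def omegaSet (T : ℝ → ℝ) (c : ℝ) : Set ℝ :=
  {y | ∃ φ : ℕ → ℕ, StrictMono φ ∧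
    Filter.Tendsto (fun n => T^[φ n] c) Filter.atTop (nhds y)}

/-
A backward orbit in the ω-limit set follows every interval cycle backwards, and it is determined by
its addresses because the intervals shrink. Let `x` be such a point. Whenever the address in a cycle
is one, `x` lies in the interval containing the maximum value `T c`, while a point `y` with other
addresses eventually lies below that interval. Two subcontinua that contain `x` and differ by such
points therefore have nested projections, so `x` is an endpoint.

If `x` were on an arc, the arc would contain some `y` of different addresses, and its projections
would keep passing the turning point `c`: otherwise the coordinates of `x` would be a monotone
backward orbit of an iterate, converging to a periodic point of the ω-limit set, which has none.
Passing `c` the arc reaches the maximum `T c`, hence it contains all points with the addresses of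
`x` in one cycle. Infinitely many of these are endpoints, but an arc has only two.

Conversely, if a coordinate of `x` is not in the ω-limit set, a small interval about a late
coordinate misses the orbit of `c`. Its pullbacks along `x` are mapped homeomorphically onto each
other, and their inverse limit is an arc through `x`.
-/

section Order

theorem monotone_or_antitone_of_succ_le_succ {α : Type*} [LinearOrder α] {z : ℕ → α}
    (h : ∀ m n, z (m + 1) ≤ z (n + 1) → z m ≤ z n) : Monotone z ∨ Antitone z := by
  have hup : Antitone fun n => z n ≤ z (n + 1) := antitone_nat_of_succ_le fun n => h n (n + 1)
  have hdown : Antitone fun n => z (n + 1) ≤ z n := antitone_nat_of_succ_le fun n => h (n + 1) n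
  by_contra! hz
  obtain ⟨m, hm⟩ := not_forall.1 (mt monotone_nat_of_le_succ hz.1)
  obtain ⟨n, hn⟩ := not_forall.1 (mt antitone_nat_of_succ_le hz.2)
  rcases le_total (z (max m n)) (z (max m n + 1)) with hle | hle
  · exact hm (hup (le_max_left m n) hle)
  · exact hn (hdown (le_max_right m n) hle)

variable {α : Type*} [ConditionallyCompleteLinearOrder α] [TopologicalSpace α] [OrderTopology α]
  {C S : Set α} {g : α → α} {z : ℕ → α}

theorem exists_isFixedPt_of_monotone_or_antitone_backward_orbit (hC : IsCompact C)
    (hg : Continuous g) (hzC : ∀ n, z n ∈ C) (hgz : ∀ n, g (z (n + 1)) = z n)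
    (hz : Monotone z ∨ Antitone z) : ∃ l ∈ C, Function.IsFixedPt g l := by
  have : Nonempty α := ⟨z 0⟩
  have hrange : range z ⊆ C := range_subset_iff.2 hzC
  obtain ⟨l, hl⟩ : ∃ l, Tendsto z atTop (𝓝 l) := hz.elim
    (fun hm => ⟨_, tendsto_atTop_ciSup hm (hC.bddAbove.mono hrange)⟩)
    (fun ha => ⟨_, tendsto_atTop_ciInf ha (hC.bddBelow.mono hrange)⟩)
  refine ⟨l, hC.isClosed.mem_of_tendsto hl (Eventually.of_forall hzC), ?_⟩
  have hgl : Tendsto (fun n => g (z (n + 1))) atTop (𝓝 (g l)) :=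
    (hg.tendsto l).comp (hl.comp (tendsto_add_atTop_nat 1))
  simp only [hgz] at hgl
  exact tendsto_nhds_unique hgl hl

theorem exists_isPeriodicPt_two_of_backward_orbit (hC : IsCompact C) (hg : Continuous g)
    (hzC : ∀ n, z n ∈ C) (hzS : ∀ n, z n ∈ S) (hgz : ∀ n, g (z (n + 1)) = z n)
    (hgS : MonotoneOn g S ∨ AntitoneOn g S) : ∃ l ∈ C, Function.IsPeriodicPt g 2 l := by
  have hmono : ∀ m n, z (m + 2) ≤ z (n + 2) → z m ≤ z n := by
    intro m n hle
    rw [← hgz m, ← hgz n]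
    rcases hgS with hm | ha
    · refine hm (hzS _) (hzS _) ?_
      rw [← hgz (m + 1), ← hgz (n + 1)]
      exact hm (hzS _) (hzS _) hle
    · refine ha (hzS _) (hzS _) ?_
      rw [← hgz (m + 1), ← hgz (n + 1)]
      exact ha (hzS _) (hzS _) hle
  exact exists_isFixedPt_of_monotone_or_antitone_backward_orbit (z := fun n => z (2 * n)) hC
    (hg.iterate 2) (fun n => hzC _) (fun n => by simp [mul_add, hgz])
    (monotone_or_antitone_of_succ_le_succ fun m n => hmono (2 * m) (2 * n))

theorem subset_uIcc_of_ordConnected_of_notMem {α : Type*} [LinearOrder α] {S : Set α}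
    (hS : S.OrdConnected) {a b u : α} (ha : a ∉ S) (hb : b ∉ S) (hu : u ∈ S)
    (huab : u ∈ uIcc a b) : S ⊆ uIcc a b := by
  wlog hab : a ≤ b generalizing a b
  · rw [uIcc_comm] at huab ⊢
    exact this hb ha huab (le_of_not_ge hab)
  rw [uIcc_of_le hab] at huab ⊢
  refine fun s hs => ⟨?_, ?_⟩
  · by_contra! h
    exact ha (hS.out hs hu ⟨h.le, huab.1⟩)
  · by_contra! h
    exact hb (hS.out hu hs ⟨huab.2, h.le⟩)

end Order

section Arc

variable {Z : Type*} [TopologicalSpace Z] {A : Set Z}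

theorem isArc_of_bijOn_Icc (hA : IsCompact A) {π : Z → ℝ} (hπ : ContinuousOn π A) {a b : ℝ}
    (hab : a < b) (hbij : BijOn π A (Icc a b)) : IsArc A := by
  have : CompactSpace A := isCompact_iff_compactSpace.1 hA
  have hcont : Continuous (hbij.equiv π) := hπ.mapsToRestrict hbij.mapsTo
  let e : A ≃ₜ Icc (0 : ℝ) 1 := hcont.homeoOfEquivCompactToT2.trans (iccHomeoI a b hab)
  refine ⟨Subtype.val ∘ e.symm, IsEmbedding.subtypeVal.comp e.symm.isEmbedding, ?_⟩
  rw [e.symm.surjective.range_comp, Subtype.range_val]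

theorem IsArc.isCompact (hA : IsArc A) : IsCompact A := by
  obtain ⟨f, hf, rfl⟩ := hA
  exact isCompact_range hf.continuous

theorem IsArc.isConnected (hA : IsArc A) : IsConnected A := by
  obtain ⟨f, hf, rfl⟩ := hA
  exact isConnected_range hf.continuous

theorem IsArc.nontrivial (hA : IsArc A) : A.Nontrivial := by
  obtain ⟨f, hf, rfl⟩ := hA
  exact ⟨f 0, mem_range_self 0, f 1, mem_range_self 1, hf.injective.ne zero_ne_one⟩

theorem IsArc.finite_isEndpointPt (hA : IsArc A) : {x ∈ A | IsEndpointPt x}.Finite := by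
  obtain ⟨f, hf, rfl⟩ := hA
  refine (toFinite {f 0, f 1}).subset ?_
  rintro _ ⟨⟨s, rfl⟩, hs⟩
  have hIic : IsConnected (f '' Iic s) := IsConnected.image
    ⟨nonempty_Iic, ordConnected_Iic.isPreconnected⟩ _ hf.continuous.continuousOn
  have hIci : IsConnected (f '' Ici s) := IsConnected.image
    ⟨nonempty_Ici, ordConnected_Ici.isPreconnected⟩ _ hf.continuous.continuousOn
  rcases hs _ _ (isClosed_Iic.isCompact.image hf.continuous) hIic
    (isClosed_Ici.isCompact.image hf.continuous) hIci
    (mem_image_of_mem f self_mem_Iic) (mem_image_of_mem f self_mem_Ici) with h | h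
  · rw [image_subset_image_iff hf.injective] at h
    exact Or.inl (congrArg f (le_antisymm (h s.2.1) s.2.1))
  · rw [image_subset_image_iff hf.injective] at h
    exact Or.inr (congrArg f (le_antisymm s.2.2 (h s.2.2)))

/-- The nasty endpoints of a space: the endpoints contained in no arc, that is, those whose
arc-component is degenerate. -/
def nastyEndpoints (Z : Type*) [TopologicalSpace Z] : Set Z :=
  {x | IsEndpointPt x ∧ ∀ A : Set Z, IsArc A → x ∉ A}

end Arc

namespace InvLim

variable {T : ℝ → ℝ} {K : Set ℝ}

/-- The coordinate projection `π_n` of the inverse limit. -/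
abbrev proj (n : ℕ) (x : InvLim T K) : ℝ := x.1 n

theorem continuous_proj (n : ℕ) : Continuous (proj n : InvLim T K → ℝ) :=
  (continuous_apply n).comp continuous_subtype_val

theorem iterate_apply_add (x : InvLim T K) (n j : ℕ) : T^[j] (x.1 (n + j)) = x.1 n := by
  induction j with
  | zero => rfl
  | succ j ih => rw [Function.iterate_succ_apply, ← add_assoc, x.2.2, ih]

theorem iterate_mem_proj_image {A : Set (InvLim T K)} {n j : ℕ} {u : ℝ}
    (hu : u ∈ proj (n + j) '' A) : T^[j] u ∈ proj n '' A := by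
  obtain ⟨x, hx, rfl⟩ := hu
  exact ⟨x, hx, (iterate_apply_add x n j).symm⟩

theorem ordConnected_proj_image {A : Set (InvLim T K)} (hA : IsPreconnected A) (n : ℕ) :
    (proj n '' A).OrdConnected :=
  (hA.image _ (continuous_proj n).continuousOn).ordConnected

theorem exists_proj_preimage_subset (hT : Continuous T) {x : InvLim T K} {U : Set (InvLim T K)}
    (hU : U ∈ 𝓝 x) : ∃ n, ∃ V ∈ 𝓝 (x.1 n), proj n ⁻¹' V ⊆ U := by
  have hnhds : 𝓝 x = ⨅ n, comap (proj n) (𝓝 (x.1 n)) := by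
    rw [nhds_subtype_eq_comap, nhds_pi, Filter.pi, comap_iInf]
    simp only [comap_comap]
    rfl
  have hanti : Antitone fun n => comap (proj n : InvLim T K → ℝ) (𝓝 (x.1 n)) := by
    refine antitone_nat_of_succ_le fun n => ?_
    have hproj : (proj n : InvLim T K → ℝ) = T ∘ proj (n + 1) := funext fun y => (y.2.2 n).symm
    rw [hproj, ← comap_comap, ← x.2.2 n]
    exact comap_mono (hT.tendsto _).le_comap
  rw [hnhds, mem_iInf_of_directed hanti.directed_ge] at hU
  exact hU

theorem eventually_notMem_proj_image (hT : Continuous T) {A : Set (InvLim T K)}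
    (hA : IsClosed A) {y : InvLim T K} (hy : y ∉ A) : ∀ᶠ n in atTop, y.1 n ∉ proj n '' A := by
  obtain ⟨N, V, hV, hVA⟩ := exists_proj_preimage_subset hT (hA.isOpen_compl.mem_nhds hy)
  filter_upwards [eventually_ge_atTop N] with n hn hmem
  obtain ⟨j, rfl⟩ := Nat.exists_eq_add_of_le hn
  obtain ⟨z, hzA, hz⟩ := iterate_mem_proj_image hmem
  rw [iterate_apply_add] at hz
  refine hVA (?_ : z.1 N ∈ V) hzA
  rw [show z.1 N = y.1 N from hz]
  exact mem_of_mem_nhds hV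

theorem exists_apply_eq_of_subset_image (hK : MapsTo T K K) {S : ℕ → Set ℝ}
    (hSK : ∀ k, S k ⊆ K) (hS : ∀ k, S k ⊆ T '' S (k + 1)) {u : ℝ} (hu : u ∈ S 0) (m : ℕ) :
    ∃ y : InvLim T K, y.1 m = u ∧ ∀ k, y.1 (m + k) ∈ S k := by
  have hpre : ∀ k, ∀ v ∈ S k, ∃ w ∈ S (k + 1), T w = v := hS
  choose! g hgS hTg using hpre
  let z : ℕ → ℝ := fun k => Nat.rec u g k
  have hz : ∀ k, z k ∈ S k := fun k => Nat.rec hu (fun k ih => hgS k (z k) ih) k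
  have hTz : ∀ k, T (z (k + 1)) = z k := fun k => hTg k (z k) (hz k)
  let w : InvLim T K := ⟨z, fun k => hSK k (hz k), hTz⟩
  have hshift : ∀ k, T^[m] (z (m + k)) = z k := fun k => by
    rw [add_comm m k]
    exact iterate_apply_add w k m
  refine ⟨⟨fun n => T^[m] (z n), fun n => hK.iterate m (w.2.1 n), fun n => ?_⟩, hshift 0,
    fun k => ?_⟩
  · rw [← Function.iterate_succ_apply' T, Function.iterate_succ_apply, hTz]
  · exact mem_of_eq_of_mem (hshift k) (hz k)

theorem compactSpace (hT : Continuous T) (hK : IsCompact K) : CompactSpace (InvLim T K) := by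
  have hclosed : IsClosed {x : ℕ → ℝ | (∀ n, x n ∈ K) ∧ ∀ n, T (x (n + 1)) = x n} := by
    simp only [ofPred_and, ofPred_forall]
    exact (isClosed_iInter fun n => hK.isClosed.preimage (continuous_apply n)).inter
      (isClosed_iInter fun n => isClosed_eq (by fun_prop) (continuous_apply n))
  exact isCompact_iff_compactSpace.1 ((isCompact_univ_pi fun _ : ℕ => hK).of_isClosed_subset hclosed
    fun x hx n _ => hx.1 n)

theorem isArc_of_tower (hT : Continuous T) (hK : IsCompact K) (hTK : MapsTo T K K)
    {S : ℕ → Set ℝ} (hSK : ∀ k, S k ⊆ K) (hSc : ∀ k, IsClosed (S k))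
    (hS : ∀ k, BijOn T (S (k + 1)) (S k)) {a b : ℝ} (hab : a < b) (hS0 : S 0 = Icc a b) (m : ℕ) :
    IsArc {y : InvLim T K | ∀ k, y.1 (m + k) ∈ S k} := by
  have := compactSpace hT hK
  refine isArc_of_bijOn_Icc (π := proj m) (IsClosed.isCompact ?_)
    (continuous_proj m).continuousOn hab ⟨?_, ?_, ?_⟩
  · rw [ofPred_forall]
    exact isClosed_iInter fun k => (hSc k).preimage (continuous_proj (m + k))
  · exact fun y hy => hS0 ▸ hy 0
  · intro y hy z hz hyz
    have hadd : ∀ k, y.1 (m + k) = z.1 (m + k) := by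
      intro k
      induction k with
      | zero => exact hyz
      | succ k ih =>
        refine (hS k).injOn (hy (k + 1)) (hz (k + 1)) ?_
        rw [← add_assoc, y.2.2, z.2.2, ih]
    refine Subtype.ext (funext fun n => ?_)
    rw [← iterate_apply_add y n m, ← iterate_apply_add z n m, add_comm n m, hadd]
  · intro u hu
    obtain ⟨y, hyu, hy⟩ := exists_apply_eq_of_subset_image hTK hSK
      (fun k => (hS k).image_eq.ge) (hS0 ▸ hu) m
    exact ⟨y, hy, hyu⟩

/-- The inverse limit `lim←(S, T|_S)` of a subset `S ⊆ K`, as a subset of `lim←(K, T)`. -/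
def sublimit (S : Set ℝ) : Set (InvLim T K) :=
  {x | ∀ n, x.1 n ∈ S}

theorem exists_mem_sublimit_apply_eq (hK : MapsTo T K K) {S : Set ℝ} (hSK : S ⊆ K)
    (hS : MapsTo T S S) (hsurj : SurjOn T S S) {u : ℝ} (hu : u ∈ S) (m : ℕ) :
    ∃ y ∈ (sublimit S : Set (InvLim T K)), y.1 m = u := by
  obtain ⟨y, hyu, hy⟩ := exists_apply_eq_of_subset_image hK (fun _ => hSK) (fun _ => hsurj) hu m
  refine ⟨y, fun n => ?_, hyu⟩
  rw [← iterate_apply_add y n m, add_comm]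
  exact hS.iterate m (hy n)

theorem perfect_sublimit (hT : Continuous T) (hK : MapsTo T K K) {S : Set ℝ} (hSK : S ⊆ K)
    (hS : MapsTo T S S) (hsurj : SurjOn T S S) (hperf : Perfect S) :
    Perfect (sublimit S : Set (InvLim T K)) := by
  refine ⟨?_, preperfect_iff_nhds.2 fun x hx U hU => ?_⟩
  · rw [sublimit, ofPred_forall]
    exact isClosed_iInter fun n => hperf.closed.preimage (continuous_proj n)
  · obtain ⟨n, V, hV, hVU⟩ := exists_proj_preimage_subset hT hU
    obtain ⟨u, ⟨huV, huS⟩, hux⟩ := preperfect_iff_nhds.1 hperf.acc _ (hx n) V hV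
    obtain ⟨y, hy, rfl⟩ := exists_mem_sublimit_apply_eq hK hSK hS hsurj huS n
    exact ⟨y, ⟨hVU huV, hy⟩, fun hyx => hux (congrArg (proj n) hyx)⟩

theorem isTotallyDisconnected_sublimit {S : Set ℝ} (hS : IsTotallyDisconnected S) :
    IsTotallyDisconnected (sublimit S : Set (InvLim T K)) := by
  refine fun t htS ht x hx y hy => Subtype.ext (funext fun n => ?_)
  exact hS (proj n '' t) (image_subset_iff.2 fun z hz => htS hz n)
    (ht.image _ (continuous_proj n).continuousOn) (mem_image_of_mem _ hx) (mem_image_of_mem _ hy)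

end InvLim

section MonotoneLaps

variable {f : ℝ → ℝ} {S L : Set ℝ}

theorem ordConnected_inter_preimage (hL : L.OrdConnected) (hS : S.OrdConnected)
    (hf : MonotoneOn f L ∨ AntitoneOn f L) : (L ∩ f ⁻¹' S).OrdConnected := by
  refine ordConnected_iff_uIcc_subset.2 fun u hu v hv => ?_
  have huv : uIcc u v ⊆ L := hL.uIcc_subset hu.1 hv.1
  have hmaps : MapsTo f (uIcc u v) (uIcc (f u) (f v)) :=
    hf.elim (fun h => (h.mono huv).mapsTo_uIcc) fun h => (h.mono huv).mapsTo_uIcc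
  exact fun w hw => ⟨huv hw, hS.uIcc_subset hu.2 hv.2 (hmaps hw)⟩

theorem subset_image_uIcc_of_notMem {a b v : ℝ} (hcont : ContinuousOn f (uIcc a b))
    (hf : MonotoneOn f (uIcc a b) ∨ AntitoneOn f (uIcc a b)) (hS : S.OrdConnected)
    (ha : f a ∉ S) (hb : f b ∉ S) (hv : v ∈ uIcc a b) (hfv : f v ∈ S) : S ⊆ f '' uIcc a b := by
  have hmaps : MapsTo f (uIcc a b) (uIcc (f a) (f b)) :=
    hf.elim (fun h => h.mapsTo_uIcc) fun h => h.mapsTo_uIcc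
  exact (subset_uIcc_of_ordConnected_of_notMem hS ha hb hfv (hmaps hv)).trans
    (intermediate_value_uIcc hcont)

end MonotoneLaps

section OmegaLimit

variable {T : ℝ → ℝ} {c : ℝ}

theorem mem_omegaSet_iff_mapClusterPt {y : ℝ} :
    y ∈ omegaSet T c ↔ MapClusterPt y atTop fun n => T^[n] c :=
  ⟨fun ⟨_, hφ, hy⟩ => .of_comp hφ.tendsto_atTop hy.mapClusterPt, fun hy => hy.tendsto_subseq⟩

theorem isClosed_omegaSet : IsClosed (omegaSet T c) := by
  have hset : omegaSet T c = {y | MapClusterPt y atTop fun n => T^[n] c} :=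
    Set.ext fun _ => mem_omegaSet_iff_mapClusterPt
  rw [hset]
  exact isClosed_setOfPred_clusterPt

theorem omegaSet_subset_of_eventually_mem {S : Set ℝ} (hS : IsClosed S)
    (hcS : ∀ᶠ n in atTop, T^[n] c ∈ S) : omegaSet T c ⊆ S :=
  fun _ ⟨_, hφ, hy⟩ => hS.mem_of_tendsto hy (hφ.tendsto_atTop.eventually hcS)

theorem mapsTo_omegaSet (hT : Continuous T) : MapsTo T (omegaSet T c) (omegaSet T c) := by
  intro y hy
  rw [mem_omegaSet_iff_mapClusterPt] at hy ⊢
  refine .of_comp (tendsto_add_atTop_nat 1) ?_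
  convert hy.continuousAt_comp hT.continuousAt using 1
  exact funext fun n => Function.iterate_succ_apply' T n c

theorem surjOn_omegaSet (hT : Continuous T) (hcpt : IsCompact (omegaSet T c))
    (hc : c ∈ omegaSet T c) : SurjOn T (omegaSet T c) (omegaSet T c) := by
  refine omegaSet_subset_of_eventually_mem (hcpt.image hT).isClosed ?_
  filter_upwards [eventually_ge_atTop 1] with n hn
  obtain ⟨m, rfl⟩ := Nat.exists_eq_add_of_le' hn
  rw [Function.iterate_succ_apply']
  exact mem_image_of_mem T ((mapsTo_omegaSet hT).iterate m hc)

end OmegaLimit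

section Unimodal

/-- A continuous unimodal map, increasing to the left and decreasing to the right of its turning
point `c`. -/
structure IsUnimodal (T : ℝ → ℝ) (c : ℝ) : Prop where
  continuous : Continuous T
  strictMonoOn : StrictMonoOn T (Iic c)
  strictAntiOn : StrictAntiOn T (Ici c)

/-- The core of a unimodal map with turning point `c`. -/
def core (T : ℝ → ℝ) (c : ℝ) : Set ℝ :=
  Icc (T^[2] c) (T c)

variable {T : ℝ → ℝ} {c : ℝ}

namespace IsUnimodal

theorem apply_le (hT : IsUnimodal T c) (u : ℝ) : T u ≤ T c := by
  rcases le_total u c with h | h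
  · exact hT.strictMonoOn.monotoneOn h self_mem_Iic h
  · exact hT.strictAntiOn.antitoneOn self_mem_Ici h h

theorem apply_iterate_two_le (hT : IsUnimodal T c) (hc : c ∈ omegaSet T c) (h : T^[2] c < c) :
    T^[2] c ≤ T (T^[2] c) := by
  by_contra! hlt
  have hmaps : MapsTo T (Iic (T^[2] c)) (Iic (T^[2] c)) := fun u hu =>
    (hT.strictMonoOn.monotoneOn (hu.trans h.le) h.le hu).trans hlt.le
  refine h.not_ge (omegaSet_subset_of_eventually_mem isClosed_Iic ?_ hc)
  filter_upwards [eventually_ge_atTop 2] with n hn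
  obtain ⟨m, rfl⟩ := Nat.exists_eq_add_of_le' hn
  rw [Function.iterate_add_apply]
  exact hmaps.iterate m self_mem_Iic

theorem mapsTo_core (hT : IsUnimodal T c) (hc : c ∈ omegaSet T c) :
    MapsTo T (core T c) (core T c) := by
  refine fun u hu => ⟨?_, hT.apply_le u⟩
  rcases lt_or_ge u c with huc | hcu
  · have h2c : T^[2] c < c := hu.1.trans_lt huc
    exact (hT.apply_iterate_two_le hc h2c).trans
      (hT.strictMonoOn.monotoneOn h2c.le huc.le hu.1)
  · exact hT.strictAntiOn.antitoneOn hcu (hcu.trans hu.2) hu.2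

theorem omegaSet_subset_core (hT : IsUnimodal T c) (hc : c ∈ omegaSet T c) :
    omegaSet T c ⊆ core T c := by
  refine omegaSet_subset_of_eventually_mem isClosed_Icc ?_
  filter_upwards [eventually_ge_atTop 1] with n hn
  obtain ⟨m, rfl⟩ := Nat.exists_eq_add_of_le' hn
  rw [Function.iterate_succ_apply]
  exact (hT.mapsTo_core hc).iterate m ⟨hT.apply_le _, le_rfl⟩

theorem monotoneOn_or_antitoneOn_of_notMem (hT : IsUnimodal T c) {S : Set ℝ}
    (hS : S.OrdConnected) (hcS : c ∉ S) : MonotoneOn T S ∨ AntitoneOn T S := by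
  by_cases h : S ⊆ Iic c
  · exact .inl (hT.strictMonoOn.monotoneOn.mono h)
  · obtain ⟨u, hu, hcu⟩ := not_subset.1 h
    refine .inr (hT.strictAntiOn.antitoneOn.mono fun v hv => ?_)
    by_contra hvc
    exact hcS (hS.out hv hu ⟨(not_le.1 hvc).le, (not_le.1 hcu).le⟩)

end IsUnimodal

end Unimodal

section Cycle

/-- A cycle of `p > 0` disjoint compact intervals, one of which contains the turning point `c`. The
intervals are addressed by `ZMod p`, so that `T` adds one to the address and `c` has address
zero. -/
structure IsIntervalCycle (T : ℝ → ℝ) (c : ℝ) {p : ℕ} (J : ZMod p → Set ℝ) : Prop where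
  period_pos : 0 < p
  mem_zero : c ∈ J 0
  ordConnected (k : ZMod p) : (J k).OrdConnected
  isCompact (k : ZMod p) : IsCompact (J k)
  mapsTo (k : ZMod p) : MapsTo T (J k) (J (k + 1))
  pairwise_disjoint : Pairwise fun k l => Disjoint (J k) (J l)

/-- The subcontinuum `G_k` of the inverse limit attached to an interval `J k` of a cycle: the
backward orbits starting in `J k` that follow the cycle backwards. -/
def cycleFiber {T : ℝ → ℝ} {K : Set ℝ} {p : ℕ} (J : ZMod p → Set ℝ) (k : ZMod p) :
    Set (InvLim T K) :=
  {x | ∀ n : ℕ, x.1 n ∈ J (k - n)}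

theorem frequently_natCast_eq {p : ℕ} [NeZero p] (k : ZMod p) :
    ∃ᶠ n : ℕ in atTop, (n : ZMod p) = k :=
  frequently_atTop.2 fun N => ⟨k.val + N * p,
    (Nat.le_mul_of_pos_right N (NeZero.pos p)).trans (Nat.le_add_left _ _), by simp⟩

variable {T : ℝ → ℝ} {c : ℝ} {p : ℕ} {J : ZMod p → Set ℝ} {K : Set ℝ}

namespace IsIntervalCycle

theorem neZero (h : IsIntervalCycle T c J) : NeZero p :=
  ⟨h.period_pos.ne'⟩

theorem address_unique (h : IsIntervalCycle T c J) {k l : ZMod p} {u : ℝ} (hk : u ∈ J k)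
    (hl : u ∈ J l) : k = l := by
  by_contra hkl
  exact disjoint_left.1 (h.pairwise_disjoint hkl) hk hl

theorem iterate_mem (h : IsIntervalCycle T c J) {k : ZMod p} {u : ℝ} (hu : u ∈ J k) (n : ℕ) :
    T^[n] u ∈ J (k + n) := by
  induction n with
  | zero => simpa using hu
  | succ n ih =>
    rw [Function.iterate_succ_apply', Nat.cast_succ, ← add_assoc]
    exact h.mapsTo _ ih

theorem iterate_turning_mem (h : IsIntervalCycle T c J) (n : ℕ) : T^[n] c ∈ J n := by
  simpa using h.iterate_mem h.mem_zero n

theorem omegaSet_subset_iUnion (h : IsIntervalCycle T c J) : omegaSet T c ⊆ ⋃ k, J k :=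
  have := h.neZero
  omegaSet_subset_of_eventually_mem (isClosed_iUnion_of_finite fun k => (h.isCompact k).isClosed)
    (Eventually.of_forall fun n => mem_iUnion_of_mem _ (h.iterate_turning_mem n))

theorem isCompact_omegaSet (h : IsIntervalCycle T c J) : IsCompact (omegaSet T c) :=
  have := h.neZero
  (isCompact_iUnion h.isCompact).of_isClosed_subset isClosed_omegaSet h.omegaSet_subset_iUnion

theorem subset_of_isPreconnected (h : IsIntervalCycle T c J) {t : Set ℝ} (ht : IsPreconnected t)
    (htJ : t ⊆ ⋃ k, J k) {k : ZMod p} {u : ℝ} (hut : u ∈ t) (huk : u ∈ J k) : t ⊆ J k := by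
  have := h.neZero
  have hrest : IsClosed (⋃ l : {l : ZMod p // l ≠ k}, J l) :=
    isClosed_iUnion_of_finite fun l => (h.isCompact l).isClosed
  have hdisj : Disjoint (J k) (⋃ l : {l : ZMod p // l ≠ k}, J l) :=
    disjoint_iUnion_right.2 fun l => h.pairwise_disjoint l.2.symm
  have hcover : t ⊆ J k ∪ ⋃ l : {l : ZMod p // l ≠ k}, J l := fun v hv => by
    obtain ⟨l, hl⟩ := mem_iUnion.1 (htJ hv)
    rcases eq_or_ne l k with rfl | hlk
    · exact .inl hl
    · exact .inr (mem_iUnion_of_mem ⟨l, hlk⟩ hl)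
  rcases isPreconnected_iff_subset_of_disjoint_closed.1 ht _ _ (h.isCompact k).isClosed hrest
    hcover (by rw [hdisj.inter_eq, inter_empty]) with hsub | hsub
  · exact hsub
  · exact (disjoint_left.1 hdisj huk (hsub hut)).elim

theorem monotoneOn_or_antitoneOn_iterate (h : IsIntervalCycle T c J) (hT : IsUnimodal T c)
    {S : Set ℝ} (hSJ : S ⊆ J 0) (hS : MonotoneOn T S ∨ AntitoneOn T S) :
    MonotoneOn T^[p] S ∨ AntitoneOn T^[p] S := by
  have hmono : ∀ n, n + 1 ≤ p → MonotoneOn T^[n + 1] S ∨ AntitoneOn T^[n + 1] S := by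
    intro n
    induction n with
    | zero => exact fun _ => hS
    | succ n ih =>
      intro hn
      have hmaps : MapsTo T^[n + 1] S (J (n + 1 : ℕ)) := fun u hu => by
        simpa using h.iterate_mem (hSJ hu) (n + 1)
      have hne : ((n + 1 : ℕ) : ZMod p) ≠ 0 := fun h0 =>
        Nat.not_dvd_of_pos_of_lt n.succ_pos hn ((ZMod.natCast_eq_zero_iff _ _).1 h0)
      have hTJ := hT.monotoneOn_or_antitoneOn_of_notMem (h.ordConnected (n + 1 : ℕ))
        fun hc => hne (h.address_unique hc h.mem_zero)
      rw [Function.iterate_succ' T]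
      rcases ih (Nat.le_of_succ_le hn) with hm | ha <;> rcases hTJ with hm' | ha'
      · exact .inl (hm'.comp hm hmaps)
      · exact .inr (ha'.comp_MonotoneOn hm hmaps)
      · exact .inr (hm'.comp_AntitoneOn ha hmaps)
      · exact .inl (ha'.comp ha hmaps)
  obtain ⟨n, rfl⟩ := Nat.exists_eq_add_of_le' h.period_pos
  exact hmono n le_rfl

theorem exists_mem_cycleFiber (h : IsIntervalCycle T c J) {x : InvLim T K}
    (hx : ∀ n, x.1 n ∈ ⋃ k, J k) : ∃ k, x ∈ cycleFiber J k := by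
  choose k hk using fun n => mem_iUnion.1 (hx n)
  have hstep : ∀ n, k n = k (n + 1) + 1 := fun n =>
    h.address_unique (hk n) (x.2.2 n ▸ h.mapsTo _ (hk (n + 1)))
  have haddress : ∀ n : ℕ, k n = k 0 - n := by
    intro n
    induction n with
    | zero => simp
    | succ n ih => rw [Nat.cast_succ, ← sub_sub, ← ih, hstep n, add_sub_cancel_right]
  exact ⟨k 0, fun n => haddress n ▸ hk n⟩

-- The largest value `T c` of `T` lies in `J 1`, so every other value of `T` lies below `J 1`.
theorem eventually_lt_of_notMem_cycleFiber (h : IsIntervalCycle T c J) (hT : IsUnimodal T c)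
    {k : ZMod p} {y : InvLim T K} (hy : y ∉ cycleFiber J k) :
    ∀ᶠ n : ℕ in atTop, k - n = 1 → ∀ u ∈ J 1, y.1 n < u := by
  obtain ⟨N, hN⟩ := not_forall.1 hy
  filter_upwards [eventually_ge_atTop N] with n hNn hn u hu
  obtain ⟨j, rfl⟩ := Nat.exists_eq_add_of_le hNn
  by_contra! huy
  have hTc : T c ∈ J 1 := by simpa using h.mapsTo 0 h.mem_zero
  have hyT : y.1 (N + j) ≤ T c := y.2.2 (N + j) ▸ hT.apply_le _
  have hyN := h.iterate_mem ((h.ordConnected 1).out hu hTc ⟨huy, hyT⟩) j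
  rw [InvLim.iterate_apply_add, ← hn, Nat.cast_add, ← sub_sub, sub_add_cancel] at hyN
  exact hN hyN

end IsIntervalCycle

end Cycle

section InfinitelyRenormalizable

/-- An infinitely renormalisable unimodal map: it has interval cycles `J i` of periods `p i`
tending to infinity whose intervals shrink uniformly. The cycles need not be nested. -/
structure IsInfinitelyRenormalizable (T : ℝ → ℝ) (c : ℝ) {p : ℕ → ℕ}
    (J : ∀ i, ZMod (p i) → Set ℝ) : Prop where
  isUnimodal : IsUnimodal T c
  isIntervalCycle (i : ℕ) : IsIntervalCycle T c (J i)
  tendsto_period : Tendsto p atTop atTop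
  eventually_diam_lt {ε : ℝ} (hε : 0 < ε) : ∀ᶠ i in atTop, ∀ k, Metric.diam (J i k) < ε

/-- The folding points of the inverse limit: the backward orbits in the ω-limit set of the turning
point. -/
def foldingPoints (T : ℝ → ℝ) (c : ℝ) (K : Set ℝ) : Set (InvLim T K) :=
  InvLim.sublimit (omegaSet T c)

variable {T : ℝ → ℝ} {c : ℝ} {p : ℕ → ℕ} {J : ∀ i, ZMod (p i) → Set ℝ} {K : Set ℝ}

namespace IsInfinitelyRenormalizable

theorem eventually_dist_lt (h : IsInfinitelyRenormalizable T c J) {ε : ℝ} (hε : 0 < ε) :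
    ∀ᶠ i in atTop, ∀ k, ∀ u ∈ J i k, ∀ v ∈ J i k, dist u v < ε := by
  filter_upwards [h.eventually_diam_lt hε] with i hi k u hu v hv
  exact (Metric.dist_le_diam_of_mem ((h.isIntervalCycle i).isCompact k).isBounded hu hv).trans_lt
    (hi k)

theorem turning_mem_omegaSet (h : IsInfinitelyRenormalizable T c J) : c ∈ omegaSet T c := by
  rw [mem_omegaSet_iff_mapClusterPt]
  refine .of_comp h.tendsto_period (Tendsto.mapClusterPt (Metric.tendsto_nhds.2 fun ε hε => ?_))
  filter_upwards [h.eventually_dist_lt hε] with i hi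
  have hmem := (h.isIntervalCycle i).iterate_turning_mem (p i)
  rw [ZMod.natCast_self] at hmem
  exact hi 0 _ hmem _ (h.isIntervalCycle i).mem_zero

theorem iterate_turning_mem_omegaSet (h : IsInfinitelyRenormalizable T c J) (n : ℕ) :
    T^[n] c ∈ omegaSet T c :=
  (mapsTo_omegaSet h.isUnimodal.continuous).iterate n h.turning_mem_omegaSet

theorem isCompact_omegaSet (h : IsInfinitelyRenormalizable T c J) : IsCompact (omegaSet T c) :=
  (h.isIntervalCycle 0).isCompact_omegaSet

theorem not_isPeriodicPt (h : IsInfinitelyRenormalizable T c J) {u : ℝ}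
    (hu : u ∈ omegaSet T c) {q : ℕ} (hq : 0 < q) : ¬ Function.IsPeriodicPt T q u := by
  intro hper
  obtain ⟨i, hi⟩ := (h.tendsto_period.eventually_gt_atTop q).exists
  have hJ := h.isIntervalCycle i
  obtain ⟨k, hk⟩ := mem_iUnion.1 (hJ.omegaSet_subset_iUnion hu)
  have hkq : u ∈ J i (k + q) := hper ▸ hJ.iterate_mem hk q
  exact Nat.not_dvd_of_pos_of_lt hq hi
    ((ZMod.natCast_eq_zero_iff _ _).1 (left_eq_add.1 (hJ.address_unique hk hkq)))

theorem iterate_turning_injective (h : IsInfinitelyRenormalizable T c J) :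
    Function.Injective fun n => T^[n] c := by
  intro m n hmn
  obtain ⟨i, him, hin⟩ := ((h.tendsto_period.eventually_gt_atTop m).and
    (h.tendsto_period.eventually_gt_atTop n)).exists
  have hJ := h.isIntervalCycle i
  have haddr := hJ.address_unique (hJ.iterate_turning_mem m)
    (mem_of_eq_of_mem hmn (hJ.iterate_turning_mem n))
  exact ((ZMod.natCast_eq_natCast_iff _ _ _).1 haddr).eq_of_lt_of_lt him hin

theorem infinite_omegaSet_inter (h : IsInfinitelyRenormalizable T c J) (i : ℕ) (k : ZMod (p i)) :
    (omegaSet T c ∩ J i k).Infinite := by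
  have hJ := h.isIntervalCycle i
  have := hJ.neZero
  refine ((Nat.frequently_atTop_iff_infinite.1 (frequently_natCast_eq k)).image
    h.iterate_turning_injective.injOn).mono ?_
  rintro _ ⟨n, rfl, rfl⟩
  exact ⟨h.iterate_turning_mem_omegaSet n, hJ.iterate_turning_mem n⟩

theorem perfect_omegaSet (h : IsInfinitelyRenormalizable T c J) : Perfect (omegaSet T c) := by
  refine ⟨isClosed_omegaSet, preperfect_iff_nhds.2 fun u hu U hU => ?_⟩
  obtain ⟨ε, hε, hεU⟩ := Metric.mem_nhds_iff.1 hU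
  obtain ⟨i, hi⟩ := (h.eventually_dist_lt hε).exists
  obtain ⟨k, hk⟩ := mem_iUnion.1 ((h.isIntervalCycle i).omegaSet_subset_iUnion hu)
  obtain ⟨v, ⟨hvΩ, hvk⟩, hvu⟩ := (h.infinite_omegaSet_inter i k).exists_notMem_finite
    (finite_singleton u)
  exact ⟨v, ⟨hεU (hi k v hvk u hk), hvΩ⟩, hvu⟩

theorem isTotallyDisconnected_omegaSet (h : IsInfinitelyRenormalizable T c J) :
    IsTotallyDisconnected (omegaSet T c) := by
  intro t htΩ ht u hu v hv
  by_contra huv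
  obtain ⟨i, hi⟩ := (h.eventually_dist_lt (dist_pos.2 huv)).exists
  have hJ := h.isIntervalCycle i
  have htJ := htΩ.trans hJ.omegaSet_subset_iUnion
  obtain ⟨k, hk⟩ := mem_iUnion.1 (htJ hu)
  exact (hi k u hk v (hJ.subset_of_isPreconnected ht htJ hu hk hv)).false

theorem exists_mem_cycleFiber (h : IsInfinitelyRenormalizable T c J) {x : InvLim T K}
    (hx : x ∈ foldingPoints T c K) (i : ℕ) : ∃ k, x ∈ cycleFiber (J i) k :=
  (h.isIntervalCycle i).exists_mem_cycleFiber fun n =>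
    (h.isIntervalCycle i).omegaSet_subset_iUnion (hx n)

theorem eventually_notMem_cycleFiber (h : IsInfinitelyRenormalizable T c J) {x y : InvLim T K}
    (hxy : x ≠ y) : ∀ᶠ i in atTop, ∀ k, x ∈ cycleFiber (J i) k → y ∉ cycleFiber (J i) k := by
  obtain ⟨n, hn⟩ := Function.ne_iff.1 (Subtype.coe_injective.ne hxy)
  filter_upwards [h.eventually_dist_lt (dist_pos.2 hn)] with i hi k hx hy
  exact (hi _ _ (hx n) _ (hy n)).false

theorem isEndpointPt (h : IsInfinitelyRenormalizable T c J) {x : InvLim T K}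
    (hx : x ∈ foldingPoints T c K) : IsEndpointPt x := by
  intro A B hAc hA hBc hB hxA hxB
  by_contra! hAB
  obtain ⟨y, hyA, hyB⟩ := not_subset.1 hAB.1
  obtain ⟨w, hwB, hwA⟩ := not_subset.1 hAB.2
  obtain ⟨i, hyi, hwi⟩ := ((h.eventually_notMem_cycleFiber (ne_of_mem_of_not_mem hxB hyB)).and
    (h.eventually_notMem_cycleFiber (ne_of_mem_of_not_mem hxA hwA))).exists
  have hT := h.isUnimodal
  have hJ := h.isIntervalCycle i
  have := hJ.neZero
  obtain ⟨k, hk⟩ := h.exists_mem_cycleFiber hx i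
  obtain ⟨n, hn, hyn, hwn, hynB, hwnA⟩ := ((frequently_natCast_eq (k - 1)).and_eventually
    ((hJ.eventually_lt_of_notMem_cycleFiber hT (hyi k hk)).and <|
      (hJ.eventually_lt_of_notMem_cycleFiber hT (hwi k hk)).and <|
      (InvLim.eventually_notMem_proj_image hT.continuous hBc.isClosed hyB).and
        (InvLim.eventually_notMem_proj_image hT.continuous hAc.isClosed hwA))).exists
  have hkn : k - n = 1 := by rw [hn, sub_sub_cancel]
  have hxn : x.1 n ∈ J i 1 := hkn ▸ hk n
  rcases le_total (y.1 n) (w.1 n) with hle | hle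
  · exact hwnA ((InvLim.ordConnected_proj_image hA.isPreconnected n).out
      (mem_image_of_mem _ hyA) (mem_image_of_mem _ hxA) ⟨hle, (hwn hkn _ hxn).le⟩)
  · exact hynB ((InvLim.ordConnected_proj_image hB.isPreconnected n).out
      (mem_image_of_mem _ hwB) (mem_image_of_mem _ hxB) ⟨hle, (hyn hkn _ hxn).le⟩)

-- Otherwise the coordinates with address zero form a backward orbit of `T^[p i]` on a set where
-- this iterate is monotone, and their limit would be a periodic point in the ω-limit set.
theorem frequently_notMem_of_monotoneOn_or_antitoneOn (h : IsInfinitelyRenormalizable T c J)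
    {x : InvLim T K} (hx : x ∈ foldingPoints T c K) {i : ℕ} {k : ZMod (p i)}
    (hk : x ∈ cycleFiber (J i) k) {B : Set ℝ} (hB : MonotoneOn T B ∨ AntitoneOn T B) :
    ∃ᶠ n : ℕ in atTop, k - n = 0 ∧ x.1 n ∉ B := by
  intro hev
  have hT := h.isUnimodal
  have hJ := h.isIntervalCycle i
  have := hJ.neZero
  obtain ⟨N, hN⟩ := eventually_atTop.1 hev
  obtain ⟨m, hm, hNm⟩ := ((frequently_natCast_eq k).and_eventually (eventually_ge_atTop N)).exists
  have haddress : ∀ r : ℕ, k - (m + r * p i : ℕ) = 0 := fun r => by simp [hm]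
  have hmem : ∀ r, x.1 (m + r * p i) ∈ J i 0 ∩ B := fun r =>
    ⟨haddress r ▸ hk _, by_contra fun hr => hN _ (hNm.trans (Nat.le_add_right _ _))
      ⟨haddress r, hr⟩⟩
  have hstep : ∀ r, T^[p i] (x.1 (m + (r + 1) * p i)) = x.1 (m + r * p i) := fun r => by
    rw [add_one_mul, ← add_assoc, InvLim.iterate_apply_add]
  obtain ⟨l, hlΩ, hl⟩ := exists_isPeriodicPt_two_of_backward_orbit h.isCompact_omegaSet
    (hT.continuous.iterate (p i)) (fun r => hx _) hmem hstep
    (hJ.monotoneOn_or_antitoneOn_iterate hT inter_subset_left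
      (hB.imp (·.mono inter_subset_right) (·.mono inter_subset_right)))
  rw [Function.IsPeriodicPt, ← Function.iterate_mul] at hl
  exact h.not_isPeriodicPt hlΩ (Nat.mul_pos hJ.period_pos two_pos) hl

-- The least element `e` of `J 1` separates `x` from `y` at every late coordinate of address one.
-- Hence `T^[p i - 1] e` lies in all late projections of address zero, while `x` keeps switching
-- from one side of `c` to the other at these coordinates.
theorem frequently_turning_mem_proj_image (h : IsInfinitelyRenormalizable T c J)
    {A : Set (InvLim T K)} (hA : IsPreconnected A) {x y : InvLim T K} (hxA : x ∈ A) (hyA : y ∈ A)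
    (hx : x ∈ foldingPoints T c K) {i : ℕ} {k : ZMod (p i)} (hk : x ∈ cycleFiber (J i) k)
    (hy : y ∉ cycleFiber (J i) k) :
    ∃ᶠ n : ℕ in atTop, k - n = 0 ∧ c ∈ InvLim.proj n '' A := by
  have hT := h.isUnimodal
  have hJ := h.isIntervalCycle i
  obtain ⟨q, hq⟩ := Nat.exists_eq_add_of_le' hJ.period_pos
  obtain ⟨e, heJ, he⟩ := (hJ.isCompact 1).exists_isLeast
    ⟨T c, by simpa using hJ.mapsTo 0 hJ.mem_zero⟩
  have hv : ∀ᶠ m : ℕ in atTop, k - m = 0 → T^[q] e ∈ InvLim.proj m '' A := by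
    have hlt := hJ.eventually_lt_of_notMem_cycleFiber hT hy
    filter_upwards [(tendsto_add_atTop_nat q).eventually hlt] with m hm hkm
    have hkmq : k - (m + q : ℕ) = 1 := by
      have hp : ((q + 1 : ℕ) : ZMod (p i)) = 0 := hq ▸ ZMod.natCast_self _
      rw [Nat.cast_succ] at hp
      rw [Nat.cast_add, ← sub_sub, hkm, zero_sub, neg_eq_iff_add_eq_zero, hp]
    exact InvLim.iterate_mem_proj_image ((InvLim.ordConnected_proj_image hA (m + q)).out
      (mem_image_of_mem _ hyA) (mem_image_of_mem _ hxA)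
      ⟨(hm hkmq e heJ).le, he (hkmq ▸ hk (m + q))⟩)
  rcases le_total (T^[q] e) c with hvc | hcv
  · refine ((h.frequently_notMem_of_monotoneOn_or_antitoneOn hx hk
      (.inl hT.strictMonoOn.monotoneOn)).and_eventually hv).mono fun m hm => ⟨hm.1.1, ?_⟩
    exact (InvLim.ordConnected_proj_image hA m).out (hm.2 hm.1.1) (mem_image_of_mem _ hxA)
      ⟨hvc, (not_le.1 hm.1.2).le⟩
  · refine ((h.frequently_notMem_of_monotoneOn_or_antitoneOn hx hk
      (.inr hT.strictAntiOn.antitoneOn)).and_eventually hv).mono fun m hm => ⟨hm.1.1, ?_⟩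
    exact (InvLim.ordConnected_proj_image hA m).out (mem_image_of_mem _ hxA) (hm.2 hm.1.1)
      ⟨(not_le.1 hm.1.2).le, hcv⟩

theorem cycleFiber_subset_of_isPreconnected (h : IsInfinitelyRenormalizable T c J)
    {A : Set (InvLim T K)} (hAc : IsClosed A) (hA : IsPreconnected A) {x y : InvLim T K}
    (hxA : x ∈ A) (hyA : y ∈ A) (hx : x ∈ foldingPoints T c K) {i : ℕ} {k : ZMod (p i)}
    (hk : x ∈ cycleFiber (J i) k) (hy : y ∉ cycleFiber (J i) k) : cycleFiber (J i) k ⊆ A := by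
  intro w hw
  by_contra hwA
  have hT := h.isUnimodal
  obtain ⟨N, hN⟩ := eventually_atTop.1
    (((h.isIntervalCycle i).eventually_lt_of_notMem_cycleFiber hT hy).and
      (InvLim.eventually_notMem_proj_image hT.continuous hAc hwA))
  obtain ⟨m, ⟨hkm, hcm⟩, hNm⟩ := ((h.frequently_turning_mem_proj_image hA hxA hyA hx hk
    hy).and_eventually (eventually_ge_atTop (N + 1))).exists
  obtain ⟨n, rfl⟩ := Nat.exists_eq_add_of_le' (Nat.le_of_add_left_le hNm)
  obtain ⟨hyn, hwn⟩ := hN n (Nat.le_of_succ_le_succ hNm)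
  have hkn : k - n = 1 := by
    rw [Nat.cast_succ, ← sub_sub] at hkm
    exact sub_eq_zero.1 hkm
  exact hwn ((InvLim.ordConnected_proj_image hA n).out (mem_image_of_mem _ hyA)
    (InvLim.iterate_mem_proj_image (j := 1) hcm)
    ⟨(hyn hkn _ (hkn ▸ hw n)).le, w.2.2 n ▸ hT.apply_le _⟩)

theorem infinite_foldingPoints_inter_cycleFiber (h : IsInfinitelyRenormalizable T c J) (i : ℕ)
    (k : ZMod (p i)) : (foldingPoints T c (core T c) ∩ cycleFiber (J i) k).Infinite := by
  have hT := h.isUnimodal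
  have hc := h.turning_mem_omegaSet
  refine Infinite.of_image (InvLim.proj 0) ((h.infinite_omegaSet_inter i k).mono ?_)
  rintro u ⟨huΩ, huk⟩
  obtain ⟨y, hy, rfl⟩ := InvLim.exists_mem_sublimit_apply_eq (hT.mapsTo_core hc)
    (hT.omegaSet_subset_core hc) (mapsTo_omegaSet hT.continuous)
    (surjOn_omegaSet hT.continuous h.isCompact_omegaSet hc) huΩ 0
  obtain ⟨l, hl⟩ := h.exists_mem_cycleFiber hy i
  have hlk : l = k := (h.isIntervalCycle i).address_unique (by simpa using hl 0) huk
  exact ⟨y, ⟨hy, hlk ▸ hl⟩, rfl⟩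

theorem notMem_of_isArc (h : IsInfinitelyRenormalizable T c J) {x : InvLim T (core T c)}
    (hx : x ∈ foldingPoints T c (core T c)) {A : Set (InvLim T (core T c))} (hA : IsArc A) :
    x ∉ A := by
  intro hxA
  obtain ⟨y, hyA, hyx⟩ := hA.nontrivial.exists_ne x
  obtain ⟨i, hi⟩ := (h.eventually_notMem_cycleFiber hyx.symm).exists
  obtain ⟨k, hk⟩ := h.exists_mem_cycleFiber hx i
  have hsub := h.cycleFiber_subset_of_isPreconnected hA.isCompact.isClosed
    hA.isConnected.isPreconnected hxA hyA hx hk (hi k hk)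
  exact h.infinite_foldingPoints_inter_cycleFiber i k
    (hA.finite_isEndpointPt.subset fun z hz => ⟨hsub hz.2, h.isEndpointPt hz.1⟩)

end IsInfinitelyRenormalizable

end InfinitelyRenormalizable

section Tower

/-- The monotone lap of the core containing the point `v`. -/
noncomputable def lap (T : ℝ → ℝ) (c v : ℝ) : Set ℝ :=
  if v ≤ c then Icc (T^[2] c) c else Icc c (T c)

/-- The successive pullbacks of the interval `I` along the backward orbit `z`: at each step the
component of the preimage under `T` in the monotone lap of the next point. -/
noncomputable def pullback (T : ℝ → ℝ) (c : ℝ) (z : ℕ → ℝ) (I : Set ℝ) : ℕ → Set ℝ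
  | 0 => I
  | k + 1 => lap T c (z (k + 1)) ∩ T ⁻¹' pullback T c z I k

variable {T : ℝ → ℝ} {c : ℝ} {z : ℕ → ℝ} {I : Set ℝ}

theorem lap_subset_core (hc : c ∈ core T c) (v : ℝ) : lap T c v ⊆ core T c := by
  rw [lap]
  split_ifs
  · exact Icc_subset_Icc_right hc.2
  · exact Icc_subset_Icc_left hc.1

theorem mem_lap {v : ℝ} (hv : v ∈ core T c) : v ∈ lap T c v := by
  rw [lap]
  split_ifs with hvc
  · exact ⟨hv.1, hvc⟩
  · exact ⟨(not_le.1 hvc).le, hv.2⟩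

theorem isClosed_lap (v : ℝ) : IsClosed (lap T c v) := by
  rw [lap]
  split_ifs <;> exact isClosed_Icc

theorem ordConnected_lap (v : ℝ) : (lap T c v).OrdConnected := by
  rw [lap]
  split_ifs <;> exact ordConnected_Icc

theorem pullback_subset_core (hc : c ∈ core T c) (hI : I ⊆ core T c) :
    ∀ k, pullback T c z I k ⊆ core T c
  | 0 => hI
  | _ + 1 => inter_subset_left.trans (lap_subset_core hc _)

theorem mem_pullback (hz : ∀ k, z k ∈ core T c) (hTz : ∀ k, T (z (k + 1)) = z k) (hI : z 0 ∈ I)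
    (k : ℕ) : z k ∈ pullback T c z I k := by
  induction k with
  | zero => exact hI
  | succ k ih => exact ⟨mem_lap (hz _), mem_preimage.2 (mem_of_eq_of_mem (hTz k) ih)⟩

theorem iterate_notMem_pullback (hI : ∀ j, T^[j] c ∉ I) (k j : ℕ) :
    T^[j] c ∉ pullback T c z I k := by
  induction k generalizing j with
  | zero => exact hI j
  | succ k ih =>
    exact fun hmem => ih (j + 1) (mem_of_eq_of_mem (Function.iterate_succ_apply' T j c) hmem.2)

namespace IsUnimodal

theorem strictMonoOn_or_strictAntiOn_lap (hT : IsUnimodal T c) (v : ℝ) :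
    StrictMonoOn T (lap T c v) ∨ StrictAntiOn T (lap T c v) := by
  rw [lap]
  split_ifs
  · exact .inl (hT.strictMonoOn.mono Icc_subset_Iic_self)
  · exact .inr (hT.strictAntiOn.mono Icc_subset_Ici_self)

theorem monotoneOn_or_antitoneOn_lap (hT : IsUnimodal T c) (v : ℝ) :
    MonotoneOn T (lap T c v) ∨ AntitoneOn T (lap T c v) :=
  (hT.strictMonoOn_or_strictAntiOn_lap v).imp StrictMonoOn.monotoneOn StrictAntiOn.antitoneOn

theorem subset_image_lap (hT : IsUnimodal T c) (hc : c ∈ core T c) {S : Set ℝ}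
    (hS : S.OrdConnected) (hcS : ∀ j, T^[j] c ∉ S) {v : ℝ} (hv : v ∈ core T c) (hTv : T v ∈ S) :
    S ⊆ T '' lap T c v := by
  have hmono := hT.monotoneOn_or_antitoneOn_lap v
  have hmem := mem_lap hv
  rw [lap] at hmono hmem ⊢
  split_ifs at hmono hmem ⊢ with hvc
  · rw [← uIcc_of_le hc.1] at hmono hmem ⊢
    exact subset_image_uIcc_of_notMem hT.continuous.continuousOn hmono hS (hcS 3) (hcS 1) hmem hTv
  · rw [← uIcc_of_le hc.2] at hmono hmem ⊢
    exact subset_image_uIcc_of_notMem hT.continuous.continuousOn hmono hS (hcS 1) (hcS 2) hmem hTv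

theorem isClosed_pullback (hT : IsUnimodal T c) (hI : IsClosed I) (k : ℕ) :
    IsClosed (pullback T c z I k) := by
  induction k with
  | zero => exact hI
  | succ k ih => exact (isClosed_lap _).inter (ih.preimage hT.continuous)

theorem ordConnected_pullback (hT : IsUnimodal T c) (hI : I.OrdConnected) (k : ℕ) :
    (pullback T c z I k).OrdConnected := by
  induction k with
  | zero => exact hI
  | succ k ih =>
    exact ordConnected_inter_preimage (ordConnected_lap _) ih (hT.monotoneOn_or_antitoneOn_lap _)

theorem bijOn_pullback (hT : IsUnimodal T c) (hc : c ∈ core T c) (hz : ∀ k, z k ∈ core T c)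
    (hTz : ∀ k, T (z (k + 1)) = z k) (hI : I.OrdConnected) (hzI : z 0 ∈ I)
    (hcI : ∀ j, T^[j] c ∉ I) (k : ℕ) :
    BijOn T (pullback T c z I (k + 1)) (pullback T c z I k) := by
  have hinj : InjOn T (lap T c (z (k + 1))) :=
    (hT.strictMonoOn_or_strictAntiOn_lap _).elim StrictMonoOn.injOn StrictAntiOn.injOn
  refine ⟨fun u hu => hu.2, hinj.mono inter_subset_left, fun u hu => ?_⟩
  obtain ⟨v, hv, rfl⟩ := hT.subset_image_lap hc (hT.ordConnected_pullback hI k)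
    (iterate_notMem_pullback hcI k) (hz (k + 1))
    (mem_of_eq_of_mem (hTz k) (mem_pullback hz hTz hzI k)) hu
  exact ⟨v, ⟨hv, hu⟩, rfl⟩

-- An interval avoiding the orbit of `c` is contained in the image of each lap that it meets, since
-- it cannot contain the images of the endpoints of the lap.
theorem exists_isArc_of_notMem_foldingPoints (hT : IsUnimodal T c) (hc : c ∈ omegaSet T c)
    {x : InvLim T (core T c)} (hx : x ∉ foldingPoints T c (core T c)) :
    ∃ A : Set (InvLim T (core T c)), IsArc A ∧ x ∈ A := by
  obtain ⟨n, hn⟩ := not_forall.1 hx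
  rw [mem_omegaSet_iff_mapClusterPt, mapClusterPt_iff_frequently] at hn
  push Not at hn
  obtain ⟨U, hU, hcU⟩ := hn
  obtain ⟨N, hN⟩ := eventually_atTop.1 hcU
  have hV : T^[N] ⁻¹' U ∈ 𝓝 (x.1 (n + N)) :=
    (hT.continuous.iterate N).continuousAt.preimage_mem_nhds
      (by rwa [InvLim.iterate_apply_add])
  have hcV : ∀ j, T^[j] c ∉ T^[N] ⁻¹' U := fun j hj =>
    hN (N + j) (Nat.le_add_right N j) (by rwa [Function.iterate_add_apply])
  have hcore : core T c ∈ 𝓝 (x.1 (n + N)) := by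
    have hxcore := x.2.1 (n + N)
    exact Icc_mem_nhds
      (hxcore.1.lt_of_ne fun heq => hcV 2 (mem_of_eq_of_mem heq (mem_of_mem_nhds hV)))
      (hxcore.2.lt_of_ne fun heq => hcV 1 (mem_of_eq_of_mem heq.symm (mem_of_mem_nhds hV)))
  obtain ⟨ε, hε, hεI⟩ := Metric.nhds_basis_closedBall.mem_iff.1 (inter_mem hV hcore)
  have hccore := hT.omegaSet_subset_core hc hc
  have hz : ∀ k, x.1 (n + N + k) ∈ core T c := fun k => x.2.1 _
  have hTz : ∀ k, T (x.1 (n + N + (k + 1))) = x.1 (n + N + k) := fun k => x.2.2 _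
  have hxI := Metric.mem_closedBall_self (x := x.1 (n + N)) hε.le
  have hIconn : (Metric.closedBall (x.1 (n + N)) ε).OrdConnected := by
    rw [Real.closedBall_eq_Icc]
    exact ordConnected_Icc
  exact ⟨_, InvLim.isArc_of_tower hT.continuous isCompact_Icc (hT.mapsTo_core hc)
    (pullback_subset_core hccore (hεI.trans inter_subset_right))
    (hT.isClosed_pullback Metric.isClosed_closedBall)
    (hT.bijOn_pullback hccore hz hTz hIconn hxI fun j hj => hcV j (hεI hj).1)
    (by linarith) (Real.closedBall_eq_Icc ..) (n + N), mem_pullback hz hTz hxI⟩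

end IsUnimodal

end Tower

theorem IsInfinitelyRenormalizable.foldingPoints_eq_nastyEndpoints {T : ℝ → ℝ} {c : ℝ} {p : ℕ → ℕ}
    {J : ∀ i, ZMod (p i) → Set ℝ} (h : IsInfinitelyRenormalizable T c J) :
    foldingPoints T c (core T c) = nastyEndpoints (InvLim T (core T c)) := by
  refine Subset.antisymm (fun x hx => ⟨h.isEndpointPt hx, fun A hA => h.notMem_of_isArc hx hA⟩)
    fun x hx => ?_
  by_contra hxF
  obtain ⟨A, hA, hxA⟩ :=
    h.isUnimodal.exists_isArc_of_notMem_foldingPoints h.turning_mem_omegaSet hxF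
  exact hx.2 A hA hxA

section NatIndexedCycles

theorem isIntervalCycle_val {T : ℝ → ℝ} {c : ℝ} {p : ℕ} {J : ℕ → Set ℝ} (hp : 0 < p)
    (hc : c ∈ J 0) (hconn : ∀ k < p, (J k).OrdConnected) (hcpt : ∀ k < p, IsCompact (J k))
    (hmap : ∀ k < p, MapsTo T (J k) (J ((k + 1) % p)))
    (hdisj : ∀ k < p, ∀ l < p, k ≠ l → Disjoint (J k) (J l)) :
    IsIntervalCycle T c fun k : ZMod p => J k.val := by
  have : NeZero p := ⟨hp.ne'⟩
  refine ⟨hp, by rwa [ZMod.val_zero], fun k => hconn _ k.val_lt, fun k => hcpt _ k.val_lt,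
    fun k => ?_, fun k l hkl => hdisj _ k.val_lt _ l.val_lt ((ZMod.val_injective p).ne hkl)⟩
  rw [ZMod.val_add, ZMod.val_one_eq_one_mod, Nat.add_mod_mod]
  exact hmap _ k.val_lt

theorem le_biSup_finset {ι α : Type*} [ConditionallyCompleteLinearOrder α] (f : ι → α)
    {s : Finset ι} {k : ι} (hk : k ∈ s) : f k ≤ ⨆ l ∈ s, f l := by
  have : Nonempty α := ⟨f k⟩
  refine le_ciSup₂ (f := fun l (_ : l ∈ s) => f l) ?_ k hk
  exact (s.finite_toSet.image f).bddAbove.mono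
    (iUnion_subset fun l => range_subset_iff.2 fun hl => mem_image_of_mem f hl)

theorem eventually_forall_lt_of_tendsto_biSup {p : ℕ → ℕ} {d : ℕ → ℕ → ℝ}
    (hd : Tendsto (fun i => ⨆ k ∈ Finset.range (p i), d i k) atTop (𝓝 0)) {ε : ℝ} (hε : 0 < ε) :
    ∀ᶠ i in atTop, ∀ k < p i, d i k < ε := by
  filter_upwards [hd.eventually_lt_const hε] with i hi k hk
  exact (le_biSup_finset (d i) (Finset.mem_range.2 hk)).trans_lt hi

theorem isInfinitelyRenormalizable_val {T : ℝ → ℝ} {c : ℝ} {p : ℕ → ℕ} {J : ℕ → ℕ → Set ℝ}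
    (hT : IsUnimodal T c) (hpos : ∀ i, 0 < p i) (hp : Tendsto p atTop atTop)
    (hc : ∀ i, c ∈ J i 0) (hconn : ∀ i, ∀ k < p i, (J i k).OrdConnected)
    (hcpt : ∀ i, ∀ k < p i, IsCompact (J i k))
    (hmap : ∀ i, ∀ k < p i, MapsTo T (J i k) (J i ((k + 1) % p i)))
    (hdisj : ∀ i, ∀ k < p i, ∀ l < p i, k ≠ l → Disjoint (J i k) (J i l))
    (hdiam : Tendsto (fun i => ⨆ k ∈ Finset.range (p i), Metric.diam (J i k)) atTop (𝓝 0)) :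
    IsInfinitelyRenormalizable T c fun i (k : ZMod (p i)) => J i k.val := by
  refine ⟨hT, fun i => isIntervalCycle_val (hpos i) (hc i) (hconn i) (hcpt i) (hmap i) (hdisj i),
    hp, fun hε => ?_⟩
  filter_upwards [eventually_forall_lt_of_tendsto_biSup hdiam hε] with i hi k
  have : NeZero (p i) := ⟨(hpos i).ne'⟩
  exact hi _ k.val_lt

end NatIndexedCycles

theorem isUnimodal_logistic {a : ℝ} (ha : 0 < a) :
    IsUnimodal (fun x => a * x * (1 - x)) (1 / 2) where
  continuous := by fun_prop
  strictMonoOn x _ y hy hxy := by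
    have hy' : y ≤ 1 / 2 := hy
    have hpos : 0 < (y - x) * (1 - x - y) := mul_pos (by linarith) (by linarith)
    nlinarith [mul_pos ha hpos]
  strictAntiOn x hx y _ hxy := by
    have hx' : 1 / 2 ≤ x := hx
    have hpos : 0 < (y - x) * (x + y - 1) := mul_pos (by linarith) (by linarith)
    nlinarith [mul_pos ha hpos]

theorem stmt17_general {T : ℝ → ℝ} {c : ℝ} {p : ℕ → ℕ} {J : ∀ i, ZMod (p i) → Set ℝ}
    (h : IsInfinitelyRenormalizable T c J) :
    foldingPoints T c (core T c) = nastyEndpoints (InvLim T (core T c)) ∧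
      (foldingPoints T c (core T c)).Nonempty ∧ Perfect (foldingPoints T c (core T c)) ∧
      IsTotallyDisconnected (foldingPoints T c (core T c)) := by
  have hT := h.isUnimodal
  have hc := h.turning_mem_omegaSet
  have hmaps := hT.mapsTo_core hc
  have hsub := hT.omegaSet_subset_core hc
  have hmapsΩ := mapsTo_omegaSet (c := c) hT.continuous
  have hsurjΩ := surjOn_omegaSet hT.continuous h.isCompact_omegaSet hc
  obtain ⟨x, hx, -⟩ := InvLim.exists_mem_sublimit_apply_eq hmaps hsub hmapsΩ hsurjΩ hc 0
  exact ⟨h.foldingPoints_eq_nastyEndpoints, ⟨x, hx⟩,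
    InvLim.perfect_sublimit hT.continuous hmaps hsub hmapsΩ hsurjΩ h.perfect_omegaSet,
    InvLim.isTotallyDisconnected_sublimit h.isTotallyDisconnected_omegaSet⟩

/-- If `T = Q_a` is an infinitely renormalisable logistic map (with
nested cycles `J i k`, `k < p i`, of `p i`-periodic intervals around `c`, periods
strictly increasing and dividing one another, whose intersection is the Cantor set
`ω(c)`), then the set `F` of folding points of the core inverse limit `X′` is a Cantor
set (nonempty, perfect and totally disconnected) consisting entirely of nasty
endpoints: `F = E_N`; in particular every point of `X′` outside this Cantor set is not
a folding point. -/
theorem stmt17 (a : ℝ) (ha : a ∈ Set.Icc (3:ℝ) 4) (T : ℝ → ℝ)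
    (hT : ∀ x, T x = a * x * (1 - x)) (c : ℝ) (hc : c = 1/2)
    (p : ℕ → ℕ) (J : ℕ → ℕ → Set ℝ)
    (hp1 : ∀ i, 2 ≤ p i) (hpdvd : ∀ i, p i ∣ p (i + 1)) (hplt : ∀ i, p i < p (i + 1))
    (hJc : ∀ i, c ∈ J i 0)
    (hJint : ∀ i k, (J i k).OrdConnected ∧ IsCompact (J i k) ∧ (J i k).Nonempty)
    (hJmap : ∀ i, ∀ k < p i, T '' J i k ⊆ J i ((k + 1) % p i))
    (hJdisj : ∀ i, ∀ k < p i, ∀ l < p i, k ≠ l → Disjoint (J i k) (J i l))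
    (hnest : ∀ i, (⋃ k ∈ Finset.range (p (i + 1)), J (i + 1) k) ⊆
      ⋃ k ∈ Finset.range (p i), J i k)
    (hdiam : Filter.Tendsto
      (fun i => ⨆ k ∈ Finset.range (p i), Metric.diam (J i k)) Filter.atTop (nhds 0))
    (homega : omegaSet T c = ⋂ i, ⋃ k ∈ Finset.range (p i), J i k)
    (hCantor : Perfect (omegaSet T c) ∧ IsTotallyDisconnected (omegaSet T c))
    (K : Set ℝ) (hK : K = Set.Icc (T^[2] c) (T c))
    (F EN : Set (InvLim T K))
    (hF : F = {x : InvLim T K | ∀ n, x.1 n ∈ omegaSet T c})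
    (hEN : EN = {x : InvLim T K | IsEndpointPt x ∧
      ∀ A : Set (InvLim T K), IsArc A → x ∉ A}) :
    F = EN ∧ F.Nonempty ∧ Perfect F ∧ IsTotallyDisconnected F := by
  obtain rfl : T = fun x => a * x * (1 - x) := funext hT
  subst hc hK hF hEN
  exact stmt17_general <| isInfinitelyRenormalizable_val
    (isUnimodal_logistic (three_pos.trans_le ha.1)) (fun i => two_pos.trans_le (hp1 i))
    (strictMono_nat_of_lt_succ hplt).tendsto_atTop hJc (fun i k _ => (hJint i k).1)
    (fun i k _ => (hJint i k).2.1) (fun i k hk => mapsTo_iff_image_subset.2 (hJmap i k hk))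
    hJdisj hdiam
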